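/- arXiv:1502.00440 — 3 statements merged into one kernel-verified Lean document; each statement's English description precedes it below -/
import Mathlib

section
/- Let n ≥ 2 and q ≥ 2/n. A continuous n-linear operator T : E₁ × ⋯ × Eₙ → F between Banach spaces has cotype q if and only if for every choice of sequences (x_j^{(i)})_{j=1}^∞ in E_i with sup_{k ∈ ℕ} ‖(x_j^{(i)})_{j=1}^k‖_Rad < ∞ for each i = 1,…,n, one has ∑_{j=1}^∞ ‖T(x_j^{(1)},…,x_j^{(n)})‖^q < ∞. -/
/-!
If `T` has cotype `q`, the cotype inequality bounds all partial sums of `∑ ‖T(x_j)‖ ^ q`.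

Conversely, suppose `T` fails to have cotype `q`. By multilinearity and scaling, for every `c > 0`
there is a finite block of vectors whose Rademacher norm is at most `c` in each coordinate and for
which `∑ ‖T(x_j)‖ ^ q ≥ 1` (`exists_block`). Take one block for each `c = 2 ^ (-m)` and enumerate
the disjoint union `Σ m, Fin (k m)` of all blocks by `ℕ`, in any order. A partial Rademacher norm of
the resulting sequence is at most that of the union of finitely many blocks, which by the triangle
inequality in `L²` is at most `∑ 2 ^ (-m) ≤ 2` (`radAvg_sigma_le`); yet the series
`∑ ‖T(x_j)‖ ^ q` diverges, since infinitely many disjoint blocks each contribute at least `1`.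

The order of the enumeration is immaterial because Rademacher norms may be taken over arbitrary
finite index types: they do not increase under passage to a subfamily (`radAvg_comp_le`) and do not
change under extension by zero (`radAvg_comp_eq`).
-/

open scoped BigOperators

noncomputable def radNorm {F : Type*} [NormedAddCommGroup F] {k : ℕ} (y : Fin k → F) : ℝ :=
  Real.sqrt (((2 : ℝ) ^ k)⁻¹ * ∑ ε : Fin k → Bool, ‖∑ j, (if ε j then y j else -y j)‖ ^ 2)

section Defs

variable {𝕜 : Type*} [RCLike 𝕜] {n : ℕ} {E : Fin n → Type*} {F : Type*}
  [∀ i, NormedAddCommGroup (E i)] [∀ i, NormedSpace 𝕜 (E i)]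
  [NormedAddCommGroup F] [NormedSpace 𝕜 F]

/-- The `n`-linear operator `T` has type `(p 0, …, p (n-1))` with constant `C`. -/
def HasTypeWith (T : ContinuousMultilinearMap 𝕜 E F) (p : Fin n → ℝ) (C : ℝ) : Prop :=
  ∀ (k : ℕ) (x : ∀ i, Fin k → E i),
    radNorm (fun j => T (fun i => x i j)) ≤ C * ∏ i, (∑ j, ‖x i j‖ ^ p i) ^ (1 / p i)

/-- The `n`-linear operator `T` has type `(p 0, …, p (n-1))`. -/
def HasType (T : ContinuousMultilinearMap 𝕜 E F) (p : Fin n → ℝ) : Prop :=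
  ∃ C > 0, HasTypeWith T p C

/-- The `n`-linear operator `T` has cotype `q` with constant `M`. -/
def HasCotypeWith (T : ContinuousMultilinearMap 𝕜 E F) (q M : ℝ) : Prop :=
  ∀ (k : ℕ) (x : ∀ i, Fin k → E i),
    (∑ j, ‖T (fun i => x i j)‖ ^ q) ^ (1 / q) ≤ M * ∏ i, radNorm (x i)

/-- The `n`-linear operator `T` has cotype `q`. -/
def HasCotype (T : ContinuousMultilinearMap 𝕜 E F) (q : ℝ) : Prop :=
  ∃ M > 0, HasCotypeWith T q M

end Defs

section LinDefs

variable {𝕜 : Type*} [RCLike 𝕜] {E F : Type*}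
  [NormedAddCommGroup E] [NormedSpace 𝕜 E] [NormedAddCommGroup F] [NormedSpace 𝕜 F]

/-- The linear operator `u` has type `p` with constant `C`. -/
def LinHasTypeWith (u : E →L[𝕜] F) (p C : ℝ) : Prop :=
  ∀ (k : ℕ) (x : Fin k → E),
    radNorm (fun j => u (x j)) ≤ C * (∑ j, ‖x j‖ ^ p) ^ (1 / p)

/-- The linear operator `u` has type `p`. -/
def LinHasType (u : E →L[𝕜] F) (p : ℝ) : Prop := ∃ C > 0, LinHasTypeWith u p C

/-- The linear operator `u` has cotype `q` with constant `C`. -/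
def LinHasCotypeWith (u : E →L[𝕜] F) (q C : ℝ) : Prop :=
  ∀ (k : ℕ) (x : Fin k → E),
    (∑ j, ‖u (x j)‖ ^ q) ^ (1 / q) ≤ C * radNorm x

/-- The linear operator `u` has cotype `q`. -/
def LinHasCotype (u : E →L[𝕜] F) (q : ℝ) : Prop := ∃ C > 0, LinHasCotypeWith u q C

end LinDefs

/-! ### Rademacher norms over finite index types -/

section RademacherAverages

variable {ι κ G : Type*} [Fintype ι] [DecidableEq ι] [Fintype κ] [DecidableEq κ]
  [NormedAddCommGroup G]

/-- The Rademacher sum `∑ ε_j y_j`, with the sign `+1` encoded by `true`. -/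
def radSum (y : ι → G) (ε : ι → Bool) : G := ∑ j, if ε j then y j else -y j

/-- The Rademacher norm of a family indexed by an arbitrary finite type; `radNorm` is the case
`ι = Fin k`. -/
noncomputable def radAvg (y : ι → G) : ℝ :=
  Real.sqrt (((2 : ℝ) ^ Fintype.card ι)⁻¹ * ∑ ε : ι → Bool, ‖radSum y ε‖ ^ 2)

lemma radNorm_eq_radAvg {k : ℕ} (y : Fin k → G) : radNorm y = radAvg y := by
  simp [radNorm, radAvg, radSum]

lemma radAvg_nonneg (y : ι → G) : 0 ≤ radAvg y := Real.sqrt_nonneg _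

/-- The Rademacher norm is a rescaled `ℓ²` norm of the vector of all signed sums. -/
lemma radAvg_eq_norm (y : ι → G) :
    radAvg y = Real.sqrt (((2 : ℝ) ^ Fintype.card ι)⁻¹) *
      ‖(WithLp.toLp 2 (radSum y) : PiLp 2 (fun _ : ι → Bool => G))‖ := by
  rw [PiLp.norm_eq_of_L2, radAvg, Real.sqrt_mul (by positivity)]

lemma radSum_add (y z : ι → G) : radSum (y + z) = radSum y + radSum z := by
  ext ε
  simp only [radSum, Pi.add_apply, ← Finset.sum_add_distrib]
  refine Finset.sum_congr rfl fun j _ => ?_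
  split_ifs
  · rfl
  · abel

lemma radAvg_add_le (y z : ι → G) : radAvg (y + z) ≤ radAvg y + radAvg z := by
  simp only [radAvg_eq_norm, radSum_add, WithLp.toLp_add, ← mul_add]
  gcongr
  exact norm_add_le _ _

lemma radAvg_zero : radAvg (0 : ι → G) = 0 := by
  simp [radAvg, radSum]

lemma radAvg_sum_le {α : Type*} (s : Finset α) (y : α → ι → G) :
    radAvg (∑ a ∈ s, y a) ≤ ∑ a ∈ s, radAvg (y a) := by
  classical
  induction s using Finset.induction_on with
  | empty => simp [radAvg_zero]
  | insert a s ha ih =>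
    rw [Finset.sum_insert ha, Finset.sum_insert ha]
    exact (radAvg_add_le _ _).trans (by gcongr)

lemma radAvg_smul {𝕜 : Type*} [RCLike 𝕜] [NormedSpace 𝕜 G] (c : 𝕜) (y : ι → G) :
    radAvg (fun j => c • y j) = ‖c‖ * radAvg y := by
  have h : radSum (fun j => c • y j) = fun ε => c • radSum y ε := by
    ext ε
    simp only [radSum, Finset.smul_sum]
    refine Finset.sum_congr rfl fun j _ => ?_
    split_ifs <;> simp
  simp only [radAvg, h, norm_smul, mul_pow, ← Finset.mul_sum]
  rw [mul_left_comm, Real.sqrt_mul (by positivity), Real.sqrt_sq (norm_nonneg c)]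

/-- Changing deterministic signs only permutes the sign patterns. -/
lemma radAvg_flip (s : ι → Bool) (y : ι → G) :
    radAvg (fun j => if s j then y j else -y j) = radAvg y := by
  have hs : Function.Involutive (fun (ε : ι → Bool) j => xor (!s j) (ε j)) := by
    intro ε
    ext j
    simp
  unfold radAvg
  congr 2
  refine Fintype.sum_equiv hs.toPerm _ _ fun ε => ?_
  congr 2
  refine Finset.sum_congr rfl fun j _ => ?_
  cases h : s j <;> cases h' : ε j <;> simp [h, h', Function.Involutive.toPerm]

/-- Replacing some of the vectors by zero does not increase the Rademacher norm: the result is the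
mean of the family and of a copy of it with some signs flipped. -/
lemma radAvg_restrict_le [NormedSpace ℝ G] (s : ι → Bool) (y : ι → G) :
    radAvg (fun j => if s j then y j else 0) ≤ radAvg y := by
  have h : (fun j => (2 : ℝ) • (if s j then y j else 0)) =
      y + fun j => if s j then y j else -y j := by
    ext j
    simp only [Pi.add_apply]
    split_ifs
    · exact two_smul ℝ _
    · simp
  have h1 := radAvg_add_le y (fun j => if s j then y j else -y j)
  rw [← h, radAvg_smul, radAvg_flip, Real.norm_ofNat] at h1
  linarith

/-- Marginalisation: the mean over all sign patterns on `κ` of a function depending only on the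
signs in the range of `f` is the mean over the sign patterns on `ι`. -/
lemma mean_comp_eq (f : ι → κ) (hf : Function.Injective f) (g : (ι → Bool) → ℝ) :
    ((2 : ℝ) ^ Fintype.card κ)⁻¹ * ∑ ε : κ → Bool, g (ε ∘ f) =
      ((2 : ℝ) ^ Fintype.card ι)⁻¹ * ∑ ε : ι → Bool, g ε := by
  classical
  let c := {a : κ // a ∉ Set.range f}
  let e : ι ⊕ c ≃ κ :=
    (Equiv.sumCongr (Equiv.ofInjective f hf) (Equiv.refl _)).trans
      (Equiv.sumCompl (fun a => a ∈ Set.range f))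
  have he : ∀ i, e (Sum.inl i) = f i := fun i => rfl
  have h1 : ∑ ε : κ → Bool, g (ε ∘ f) = ∑ p : (ι → Bool) × (c → Bool), g p.1 := by
    refine Fintype.sum_equiv
      ((Equiv.arrowCongr e.symm (Equiv.refl Bool)).trans (Equiv.sumArrowEquivProdArrow _ _ _))
      _ _ fun ε => ?_
    rfl
  have h2 : Fintype.card κ = Fintype.card ι + Fintype.card c := by
    rw [← Fintype.card_sum, Fintype.card_congr e]
  rw [h1, Fintype.sum_prod_type_right, h2, pow_add]
  simp only [Finset.sum_const, Finset.card_univ, Fintype.card_fun, Fintype.card_bool, nsmul_eq_mul,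
    Nat.cast_pow, Nat.cast_ofNat]
  field_simp

/-- Extension by zero does not change the Rademacher norm. -/
lemma radAvg_comp_eq (f : ι → κ) (hf : Function.Injective f) (y : κ → G)
    (hy : ∀ a, a ∉ Set.range f → y a = 0) : radAvg (y ∘ f) = radAvg y := by
  have h : ∀ ε : κ → Bool, radSum y ε = radSum (y ∘ f) (ε ∘ f) := by
    intro ε
    refine (Fintype.sum_of_injective f hf _ _ (fun a ha => ?_) fun i => rfl).symm
    simp [hy a ha]
  unfold radAvg
  simp only [h]
  rw [mean_comp_eq f hf fun ε => ‖radSum (y ∘ f) ε‖ ^ 2]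

/-- Passing to a subfamily does not increase the Rademacher norm. -/
lemma radAvg_comp_le [NormedSpace ℝ G] (f : ι → κ) (hf : Function.Injective f) (y : κ → G) :
    radAvg (y ∘ f) ≤ radAvg y := by
  classical
  let s : κ → Bool := fun a => decide (a ∈ Set.range f)
  have h := radAvg_comp_eq f hf (fun a => if s a then y a else 0)
    (fun a ha => by simp only [s, ha]; simp)
  have h2 : (fun a => if s a then y a else 0) ∘ f = y ∘ f := by
    ext i
    simp [s]
  rw [← h2, h]
  exact radAvg_restrict_le s y

lemma norm_le_radAvg [NormedSpace ℝ G] (y : ι → G) (j : ι) : ‖y j‖ ≤ radAvg y := by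
  have h := radAvg_comp_le (fun _ : Unit => j) (fun _ _ _ => rfl) y
  refine le_trans (le_of_eq ?_) h
  have h1 : ∀ ε : Unit → Bool, ‖radSum (y ∘ fun _ : Unit => j) ε‖ = ‖y j‖ := by
    intro ε
    simp only [radSum, Finset.univ_unique, Finset.sum_singleton, Function.comp_apply]
    split_ifs <;> simp
  simp [radAvg, h1]

/-- Triangle inequality for a disjoint union of blocks. -/
lemma radAvg_sigma_le {N : ℕ} (k : Fin N → ℕ) (y : (Σ m, Fin (k m)) → G) :
    radAvg y ≤ ∑ m, radAvg (fun j => y ⟨m, j⟩) := by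
  have h : y = ∑ m : Fin N, fun p : Σ m, Fin (k m) => if p.1 = m then y p else 0 := by
    ext p
    simp [Finset.sum_apply]
  conv_lhs => rw [h]
  refine (radAvg_sum_le _ _).trans (Finset.sum_le_sum fun m _ => ?_)
  rw [← radAvg_comp_eq (Sigma.mk m) sigma_mk_injective]
  · exact le_of_eq (by congr 1; ext j; simp)
  · rintro ⟨m', j⟩ hp
    have : m' ≠ m := by
      rintro rfl
      exact hp ⟨j, rfl⟩
    simp [this]

end RademacherAverages

/-! ### Small blocks from failure of cotype -/

section Blocks

variable {𝕜 : Type*} [RCLike 𝕜] {n : ℕ} {E : Fin n → Type*} {F : Type*}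
  [∀ i, NormedAddCommGroup (E i)] [∀ i, NormedSpace 𝕜 (E i)]
  [NormedAddCommGroup F] [NormedSpace 𝕜 F]

/-- If `T` fails to have cotype `q`, there are blocks with arbitrarily small Rademacher norms on
which `∑ ‖T(x_j)‖ ^ q ≥ 1`. -/
lemma exists_block {q : ℝ} (hq : 0 < q) (T : ContinuousMultilinearMap 𝕜 E F)
    (hT : ¬ HasCotype T q) {c : ℝ} (hc : 0 < c) :
    ∃ (k : ℕ) (x : ∀ i, Fin k → E i), (∀ i, radAvg (x i) ≤ c) ∧
      1 ≤ ∑ j, ‖T (fun i => x i j)‖ ^ q := by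
  let _ : ∀ i, NormedSpace ℝ (E i) := fun i => NormedSpace.restrictScalars ℝ 𝕜 (E i)
  have hM : ∃ (k : ℕ) (x : ∀ i, Fin k → E i), (c ^ n)⁻¹ * ∏ i, radNorm (x i) <
      (∑ j, ‖T (fun i => x i j)‖ ^ q) ^ (1 / q) := by
    by_contra! hcon
    exact hT ⟨(c ^ n)⁻¹, by positivity, hcon⟩
  obtain ⟨k, x, hx⟩ := hM
  simp only [radNorm_eq_radAvg] at hx
  -- A zero Rademacher norm would make every `T(x_j)` vanish.
  have hr : ∀ i, 0 < radAvg (x i) := by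
    intro i
    refine lt_of_le_of_ne (radAvg_nonneg _) fun h0 => ?_
    have hz : ∀ j, T (fun i => x i j) = 0 := fun j =>
      T.map_coord_zero i (norm_le_zero_iff.1 (h0 ▸ norm_le_radAvg (x i) j))
    rw [Finset.prod_eq_zero (Finset.mem_univ i) h0.symm] at hx
    simp [hz, Real.zero_rpow hq.ne', Real.zero_rpow (inv_ne_zero hq.ne')] at hx
  have hP : 0 < ∏ i, radAvg (x i) := Finset.prod_pos fun i _ => hr i
  set P := ∏ i, radAvg (x i) with hPdef
  refine ⟨k, fun i j => ((c / radAvg (x i) : ℝ) : 𝕜) • x i j, fun i => ?_, ?_⟩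
  · rw [radAvg_smul, RCLike.norm_ofReal, abs_of_pos (div_pos hc (hr i)),
      div_mul_cancel₀ _ (hr i).ne']
  · have hn : ∀ j, ‖T (fun i => ((c / radAvg (x i) : ℝ) : 𝕜) • x i j)‖ ^ q =
        (c ^ n / P) ^ q * ‖T (fun i => x i j)‖ ^ q := by
      intro j
      have h1 : ‖∏ i, ((c / radAvg (x i) : ℝ) : 𝕜)‖ = c ^ n / P := by
        rw [← RCLike.ofReal_prod, RCLike.norm_ofReal, Finset.prod_div_distrib,
          Finset.prod_const, Finset.card_univ, Fintype.card_fin, abs_of_pos (by positivity)]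
      rw [T.map_smul_univ (fun i => ((c / radAvg (x i) : ℝ) : 𝕜)) (fun i => x i j), norm_smul, h1,
        Real.mul_rpow (by positivity) (norm_nonneg _)]
    simp only [hn, ← Finset.mul_sum]
    have hS : 0 ≤ ∑ j, ‖T (fun i => x i j)‖ ^ q := by positivity
    have h2 : ((c ^ n)⁻¹ * P) ^ q ≤ ∑ j, ‖T (fun i => x i j)‖ ^ q := by
      have := Real.rpow_le_rpow (by positivity) hx.le hq.le
      rwa [← Real.rpow_mul hS, one_div_mul_cancel hq.ne', Real.rpow_one] at this
    calc (1 : ℝ) = (c ^ n / P) ^ q * ((c ^ n)⁻¹ * P) ^ q := by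
          rw [← Real.mul_rpow (by positivity) (by positivity)]
          have : c ^ n / P * ((c ^ n)⁻¹ * P) = 1 := by field_simp
          rw [this, Real.one_rpow]
      _ ≤ _ := by gcongr

end Blocks

/-- For `n ≥ 2` and `q ≥ 2/n`, a continuous `n`-linear operator `T` has cotype `q` if and
only if, for all sequences `(x_j⁽ⁱ⁾)_j` in `Eᵢ` whose partial Rademacher averages are
uniformly bounded for each `i`, the series `∑_j ‖T(x_j⁽¹⁾,…,x_j⁽ⁿ⁾)‖^q` converges. -/
theorem hasCotype_iff_sequences
    {𝕜 : Type*} [RCLike 𝕜] {n : ℕ} {E : Fin n → Type*} {F : Type*}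
    [∀ i, NormedAddCommGroup (E i)] [∀ i, NormedSpace 𝕜 (E i)] [∀ i, CompleteSpace (E i)]
    [NormedAddCommGroup F] [NormedSpace 𝕜 F] [CompleteSpace F]
    (hn : 2 ≤ n) (q : ℝ) (hq : 2 / (n : ℝ) ≤ q)
    (T : ContinuousMultilinearMap 𝕜 E F) :
    HasCotype T q ↔
      ∀ x : ∀ i, ℕ → E i,
        (∀ i, ∃ C : ℝ, ∀ k : ℕ, radNorm (fun j : Fin k => x i (j : ℕ)) ≤ C) →
        Summable (fun j : ℕ => ‖T (fun i => x i j)‖ ^ q) := by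
  have hn0 : (0 : ℝ) < n := by exact_mod_cast (by omega : 0 < n)
  have hq0 : 0 < q := lt_of_lt_of_le (by positivity) hq
  constructor
  · rintro ⟨M, hM, hT⟩ x hx
    choose C hC using hx
    have hnn : ∀ j : ℕ, 0 ≤ ‖T (fun i => x i j)‖ ^ q := fun j => by positivity
    refine summable_of_sum_range_le (c := (M * ∏ i, C i) ^ q) hnn fun k => ?_
    have h1 := hT k fun i j => x i j
    have hS : 0 ≤ ∑ j : Fin k, ‖T (fun i => x i j)‖ ^ q := by positivity
    have h2 : M * ∏ i, radNorm (fun j : Fin k => x i j) ≤ M * ∏ i, C i := by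
      gcongr with i
      · exact fun i _ => Real.sqrt_nonneg _
      · exact hC i k
    have h3 := Real.rpow_le_rpow (by positivity) (h1.trans h2) hq0.le
    rw [← Real.rpow_mul hS, one_div_mul_cancel hq0.ne', Real.rpow_one] at h3
    rwa [← Fin.sum_univ_eq_sum_range (fun j => ‖T (fun i => x i j)‖ ^ q)]
  · intro h
    by_contra hT
    let _ : ∀ i, NormedSpace ℝ (E i) := fun i => NormedSpace.restrictScalars ℝ 𝕜 (E i)
    choose k x hx hsum using fun m : ℕ =>
      exists_block hq0 T hT (c := (1 / 2 : ℝ) ^ m) (by positivity)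
    have hk : ∀ m, 0 < k m := by
      intro m
      rw [Nat.pos_iff_ne_zero]
      intro h0
      have : IsEmpty (Fin (k m)) := by rw [h0]; infer_instance
      have := hsum m
      rw [Finset.univ_eq_empty, Finset.sum_empty] at this
      linarith
    have : Infinite (Σ m, Fin (k m)) :=
      Infinite.of_injective (fun m => (⟨m, 0, hk m⟩ : Σ m, Fin (k m)))
        fun a b hab => congrArg Sigma.fst hab
    obtain ⟨e⟩ : Nonempty (ℕ ≃ Σ m, Fin (k m)) := nonempty_equiv_of_countable
    have hs := h (fun i j => x (e j).1 i (e j).2) fun i => ⟨2, fun K => by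
      -- The first `K` terms all lie in the first `N` blocks.
      obtain ⟨N, hN⟩ : ∃ N, ∀ j : Fin K, (e j).1 < N :=
        ⟨Finset.univ.sup (fun j : Fin K => (e j).1) + 1, fun j =>
          Nat.lt_succ_of_le (Finset.le_sup (f := fun j : Fin K => (e j).1) (Finset.mem_univ j))⟩
      let f : Fin K → Σ m : Fin N, Fin (k m) := fun j => ⟨⟨(e j).1, hN j⟩, (e j).2⟩
      have hf : Function.Injective f := by
        refine Function.Injective.of_comp
          (f := fun p : Σ m : Fin N, Fin (k m) => (⟨p.1, p.2⟩ : Σ m, Fin (k m))) ?_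
        exact e.injective.comp Fin.val_injective
      rw [radNorm_eq_radAvg]
      calc _ ≤ radAvg (fun p : Σ m : Fin N, Fin (k m) => x p.1 i p.2) :=
            radAvg_comp_le f hf (fun p : Σ m : Fin N, Fin (k m) => x p.1 i p.2)
        _ ≤ ∑ m : Fin N, radAvg (x m i) :=
            radAvg_sigma_le (fun m : Fin N => k m) _
        _ ≤ ∑ m : Fin N, (1 / 2 : ℝ) ^ (m : ℕ) := Finset.sum_le_sum fun m _ => hx m i
        _ = ∑ m ∈ Finset.range N, (1 / 2 : ℝ) ^ m :=
            Fin.sum_univ_eq_sum_range (fun m => (1 / 2 : ℝ) ^ m) N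
        _ ≤ 2 := sum_geometric_two_le N⟩
    have hs' : Summable fun p : Σ m, Fin (k m) => ‖T (fun i => x p.1 i p.2)‖ ^ q :=
      e.summable_iff.1 hs
    -- The block sums would have to tend to zero, but each is at least `1`.
    have ht := hs'.sigma.tendsto_atTop_zero
    have := ge_of_tendsto' ht (b := 1) fun m => by
      rw [tsum_fintype]
      exact hsum m
    linarith
end

section
/- Every finite rank continuous n-linear operator T : E₁ × ⋯ × Eₙ → F between Banach spaces has every proper type (p₁,…,pₙ), that is, T has type (p₁,…,pₙ) whenever 1/2 ≤ 1/p₁ + ⋯ + 1/pₙ < 1. -/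
/-!
Write `V` for the span of the range of `T`. As `V` is finite-dimensional it is isomorphic to a
Euclidean space, where iterating the parallelogram law shows that the Rademacher norm of
`(y j)` equals `(∑ j, ‖y j‖ ^ 2) ^ (1 / 2)` (`sum_signs_norm_sq`). Transporting this through the
isomorphism bounds the Rademacher norm of `(T (x j))` by a multiple of the `ℓ²` norm of
`(‖T (x j)‖)`, hence of `(∏ i, ‖x i j‖)`.

It remains to see that `∑ j, (∏ i, a i j) ^ 2 ≤ ∏ i, (∑ j, a i j ^ p i) ^ (2 / p i)` as soon as
`1 / 2 ≤ ∑ i, 1 / p i` (`sum_prod_sq_le`): this combines the generalized Hölder inequality with the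
decrease of `ℓ^r` norms in `r`, and follows, after normalization, from the weighted inequality
between geometric and arithmetic means.
-/

open scoped BigOperators

/-- Iterated parallelogram law. The offset `z` is there for the induction on `k`. -/
theorem sum_signs_norm_sq (𝕜 : Type*) [RCLike 𝕜] {G : Type*} [NormedAddCommGroup G]
    [InnerProductSpace 𝕜 G] (k : ℕ) (y : Fin k → G) (z : G) :
    ∑ ε : Fin k → Bool, ‖z + ∑ j, (if ε j then y j else -y j)‖ ^ 2
      = 2 ^ k * (‖z‖ ^ 2 + ∑ j, ‖y j‖ ^ 2) := by
  induction k generalizing z with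
  | zero => simp
  | succ k ih =>
    rw [← (Fin.consEquiv (fun _ : Fin (k + 1) => Bool)).sum_comp, Fintype.sum_prod_type,
      Fintype.sum_bool]
    simp only [Fin.consEquiv_apply, Fin.sum_univ_succ, Fin.cons_zero, Fin.cons_succ, ← add_assoc]
    simp only [if_true, Bool.false_eq_true, if_false]
    rw [ih, ih]
    have h := parallelogram_law_with_norm 𝕜 z (y 0)
    rw [sub_eq_add_neg] at h
    rw [pow_succ]
    linear_combination (2 : ℝ) ^ k * h

/-- On a finite-dimensional subspace the Rademacher norm is dominated by the `ℓ²` norm. -/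
theorem radNorm_le_of_finiteDimensional {𝕜 : Type*} [RCLike 𝕜] {F : Type*}
    [NormedAddCommGroup F] [NormedSpace 𝕜 F] (V : Submodule 𝕜 F) [FiniteDimensional 𝕜 V] :
    ∃ C > 0, ∀ (k : ℕ) (y : Fin k → F), (∀ j, y j ∈ V) →
      radNorm y ≤ C * Real.sqrt (∑ j, ‖y j‖ ^ 2) := by
  have e : V ≃L[𝕜] EuclideanSpace 𝕜 (Fin (Module.finrank 𝕜 V)) :=
    ContinuousLinearEquiv.ofFinrankEq (by simp)
  set A := ‖(e : V →L[𝕜] EuclideanSpace 𝕜 (Fin (Module.finrank 𝕜 V)))‖ with hA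
  set B := ‖(e.symm : EuclideanSpace 𝕜 (Fin (Module.finrank 𝕜 V)) →L[𝕜] V)‖ with hB
  have hA0 : 0 ≤ A := norm_nonneg _
  have hB0 : 0 ≤ B := norm_nonneg _
  have h1 : ∀ v : V, ‖e v‖ ≤ A * ‖v‖ := fun v =>
    (e : V →L[𝕜] EuclideanSpace 𝕜 (Fin (Module.finrank 𝕜 V))).le_opNorm v
  have h2 : ∀ v : V, ‖v‖ ≤ B * ‖e v‖ := fun v => by
    simpa using (e.symm : _ →L[𝕜] V).le_opNorm (e v)
  refine ⟨A * B + 1, by positivity, fun k y hy => ?_⟩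
  lift y to Fin k → V using hy
  have key : ∑ ε : Fin k → Bool, ‖∑ j, (if ε j then (y j : F) else -(y j : F))‖ ^ 2
      ≤ 2 ^ k * ((A * B) ^ 2 * ∑ j, ‖(y j : F)‖ ^ 2) := by
    calc _ ≤ ∑ ε : Fin k → Bool, B ^ 2 * ‖∑ j, (if ε j then e (y j) else -e (y j))‖ ^ 2 := by
          refine Finset.sum_le_sum fun ε _ => ?_
          have h := h2 (∑ j, (if ε j then y j else -y j))
          simp only [map_sum, apply_ite e, map_neg] at h
          rw [← mul_pow]
          refine pow_le_pow_left₀ (norm_nonneg _) (le_trans (le_of_eq ?_) h) 2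
          rw [Submodule.coe_norm, AddSubmonoidClass.coe_finsetSum]
          simp only [apply_ite (Subtype.val : V → F), NegMemClass.coe_neg]
      _ = B ^ 2 * (2 ^ k * ∑ j, ‖e (y j)‖ ^ 2) := by
          have h := sum_signs_norm_sq 𝕜 k (fun j => e (y j)) 0
          simp only [zero_add, norm_zero, ne_eq, OfNat.ofNat_ne_zero, not_false_eq_true,
            zero_pow] at h
          rw [← Finset.mul_sum, h]
      _ ≤ B ^ 2 * (2 ^ k * ∑ j, (A * ‖y j‖) ^ 2) := by
          gcongr with j
          exact h1 _
      _ = _ := by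
          simp only [mul_pow, ← Finset.mul_sum, Submodule.coe_norm]
          ring
  have hAB : 0 ≤ A * B := by positivity
  calc radNorm (fun j => (y j : F))
      ≤ Real.sqrt ((A * B) ^ 2 * ∑ j, ‖(y j : F)‖ ^ 2) := by
        refine Real.sqrt_le_sqrt ?_
        rw [inv_mul_le_iff₀ (by positivity)]
        exact key
    _ = A * B * Real.sqrt (∑ j, ‖(y j : F)‖ ^ 2) := by
        rw [Real.sqrt_mul (by positivity), Real.sqrt_sq hAB]
    _ ≤ _ := by gcongr; linarith

/-- A form of the generalized Hölder inequality `ℓ^{p 0} ⋯ ℓ^{p (n-1)} ⊆ ℓ²`, with constant one. -/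
theorem sum_prod_sq_le {n k : ℕ} (p : Fin n → ℝ) (hp : ∀ i, 0 < p i)
    (h : (1 : ℝ) / 2 ≤ ∑ i, 1 / p i) (a : Fin n → Fin k → ℝ) (ha : ∀ i j, 0 ≤ a i j) :
    ∑ j, (∏ i, a i j) ^ 2 ≤ (∏ i, (∑ j, a i j ^ p i) ^ (1 / p i)) ^ 2 := by
  have hpow : ∀ i j, 0 ≤ a i j ^ p i := fun i j => Real.rpow_nonneg (ha i j) _
  have hS : ∀ i, 0 ≤ ∑ j, a i j ^ p i := fun i => Finset.sum_nonneg fun j _ => hpow i j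
  by_cases h0 : ∃ i, ∑ j, a i j ^ p i = 0
  · obtain ⟨i, hi⟩ := h0
    have hz : ∀ j, a i j = 0 := fun j => by
      have := (Finset.sum_eq_zero_iff_of_nonneg fun j _ => hpow i j).1 hi j (Finset.mem_univ j)
      exact (Real.rpow_eq_zero (ha i j) (hp i).ne').1 this
    have : ∑ j, (∏ i, a i j) ^ 2 = 0 := Finset.sum_eq_zero fun j _ => by
      rw [Finset.prod_eq_zero (Finset.mem_univ i) (hz j)]; simp
    rw [this]
    positivity
  push Not at h0
  have hSpos : ∀ i, 0 < ∑ j, a i j ^ p i := fun i => (hS i).lt_of_ne' (h0 i)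
  set s := ∑ i, 1 / p i with hs
  have hs0 : 0 < s := by linarith
  set S : Fin n → ℝ := fun i => ∑ j, a i j ^ p i with hSdef
  set b : Fin n → Fin k → ℝ := fun i j => a i j ^ p i / S i with hb
  have hb0 : ∀ i j, 0 ≤ b i j := fun i j => div_nonneg (hpow i j) (hS i)
  have hb1 : ∀ i j, b i j ≤ 1 := fun i j =>
    (div_le_one (hSpos i)).2 (Finset.single_le_sum (fun j _ => hpow i j) (Finset.mem_univ j))
  have hbsum : ∀ i, ∑ j, b i j = 1 := fun i => by
    rw [← Finset.sum_div]
    exact div_self (h0 i)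
  have hab : ∀ i j, a i j = S i ^ (1 / p i) * b i j ^ (1 / p i) := fun i j => by
    rw [← Real.mul_rpow (hS i) (hb0 i j), mul_div_cancel₀ _ (h0 i), ← Real.rpow_mul (ha i j),
      mul_one_div_cancel (hp i).ne', Real.rpow_one]
  have hterm : ∀ j, (∏ i, b i j ^ (1 / p i)) ^ 2 ≤ ∑ i, (1 / p i / s) * b i j := fun j => by
    calc (∏ i, b i j ^ (1 / p i)) ^ 2 = ∏ i, b i j ^ (1 / p i * 2) := by
          rw [← Finset.prod_pow]
          refine Finset.prod_congr rfl fun i _ => ?_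
          rw [Real.rpow_mul (hb0 i j), Real.rpow_ofNat]
      -- Since `b i j ≤ 1` and `1 / s ≤ 2`, lowering the exponents so that they sum to one
      -- increases the product.
      _ ≤ ∏ i, b i j ^ (1 / p i / s) := by
          refine Finset.prod_le_prod (fun i _ => Real.rpow_nonneg (hb0 i j) _) fun i _ => ?_
          have hpi := hp i
          refine Real.rpow_le_rpow_of_exponent_ge_of_imp (hb0 i j) (hb1 i j) ?_ ?_
          · rw [div_le_iff₀ hs0]
            have : 0 < 1 / p i := by positivity
            nlinarith
          · intro _ h'
            have : 0 < 1 / p i * 2 := by positivity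
            exact absurd h' this.ne'
      _ ≤ _ := by
          refine Real.geom_mean_le_arith_mean_weighted _ _ _ (fun i _ => ?_) ?_ fun i _ => hb0 i j
          · have hpi := hp i
            positivity
          · rw [← Finset.sum_div, ← hs, div_self hs0.ne']
  have htot : ∑ j, (∏ i, b i j ^ (1 / p i)) ^ 2 ≤ 1 := by
    refine (Finset.sum_le_sum fun j _ => hterm j).trans (le_of_eq ?_)
    rw [Finset.sum_comm]
    simp only [← Finset.mul_sum, hbsum, mul_one]
    rw [← Finset.sum_div, ← hs, div_self hs0.ne']
  calc ∑ j, (∏ i, a i j) ^ 2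
      = (∏ i, S i ^ (1 / p i)) ^ 2 * ∑ j, (∏ i, b i j ^ (1 / p i)) ^ 2 := by
        rw [Finset.mul_sum]
        refine Finset.sum_congr rfl fun j _ => ?_
        rw [← mul_pow, ← Finset.prod_mul_distrib]
        simp only [← hab]
    _ ≤ _ := mul_le_of_le_one_right (sq_nonneg _) htot

/-- Every finite rank continuous `n`-linear operator between Banach spaces has
every proper type `(p₁, …, pₙ)`, i.e. whenever `1/2 ≤ 1/p₁ + ⋯ + 1/pₙ < 1`. -/
theorem finite_rank_has_type
    {𝕜 : Type*} [RCLike 𝕜] {n : ℕ} {E : Fin n → Type*} {F : Type*}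
    [∀ i, NormedAddCommGroup (E i)] [∀ i, NormedSpace 𝕜 (E i)]
    [∀ i, CompleteSpace (E i)] [NormedAddCommGroup F] [NormedSpace 𝕜 F] [CompleteSpace F]
    (T : ContinuousMultilinearMap 𝕜 E F)
    (hrank : FiniteDimensional 𝕜 (Submodule.span 𝕜 (Set.range (fun v : (∀ i, E i) => T v))))
    (p : Fin n → ℝ) (hp : ∀ i, 0 < p i)
    (h₁ : (1 : ℝ) / 2 ≤ ∑ i, 1 / p i) (h₂ : ∑ i, 1 / p i < 1) :
    HasType T p := by
  obtain ⟨C, hC, hrad⟩ := radNorm_le_of_finiteDimensional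
    (Submodule.span 𝕜 (Set.range (fun v : (∀ i, E i) => T v)))
  refine ⟨C * (‖T‖ + 1), by positivity, fun k x => ?_⟩
  refine (hrad k _ fun j => Submodule.subset_span ⟨_, rfl⟩).trans ?_
  rw [mul_assoc]
  refine mul_le_mul_of_nonneg_left ?_ hC.le
  have hP : 0 ≤ ∏ i, (∑ j, ‖x i j‖ ^ p i) ^ (1 / p i) := by positivity
  refine Real.sqrt_le_iff.2 ⟨by positivity, ?_⟩
  calc ∑ j, ‖T (fun i => x i j)‖ ^ 2
      ≤ ∑ j, ((‖T‖ + 1) * ∏ i, ‖x i j‖) ^ 2 := by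
        gcongr with j
        refine (T.le_opNorm _).trans ?_
        gcongr
        linarith
    _ = (‖T‖ + 1) ^ 2 * ∑ j, (∏ i, ‖x i j‖) ^ 2 := by simp only [mul_pow, Finset.mul_sum]
    _ ≤ _ := by
        rw [mul_pow]
        gcongr
        exact sum_prod_sq_le p hp h₁ _ fun i j => norm_nonneg _
end

section
/- Let E₁,…,E_{n+1} be Banach spaces and φ_i ∈ E_i' nonzero continuous linear functionals (i = 1,…,n). Suppose E_{n+1} has type p with 1 < p ≤ 2 and has the sign lower p-estimate property. Then the (n+1)-linear operator φ₁ ⊗ ⋯ ⊗ φₙ ⊗ id_{E_{n+1}} : E₁ × ⋯ × E_{n+1} → E_{n+1}, (x₁,…,x_{n+1}) ↦ φ₁(x₁) ⋯ φₙ(xₙ) x_{n+1}, has every type (p₁,…,p_{n+1}) with 1/2 ≤ 1/p₁ + ⋯ + 1/p_{n+1} < 1 and p_k = p for some k, and it does NOT have type (r₁,…,r_{n+1}) for any (r₁,…,r_{n+1}) with 1/2 ≤ 1/r₁ + ⋯ + 1/r_{n+1} < 1/p. -/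
/-!
The positive half uses only that the target space has type `p` and that `T` is bounded: with
`‖T x_j‖ ≤ ‖T‖ ∏ i, ‖x i j‖`, every factor except the `k`-th (where `p_k = p`) is dominated by its
`ℓ^{p_i}` norm, uniformly in `j`, and what remains is exactly the `ℓ^p` norm of the `k`-th
sequence (`hasType_of_linHasType`).

For the negative half, choose `v_i` with `φ_i v_i = 1` and test `T` on the constant sequences `v_i`
together with the sequence `y_j` of the sign lower estimate. Then `T` returns `y_j`, whose
Rademacher norm is at least `R k^{1/p}` (`le_radNorm`), whereas the right-hand side of the type
inequality is at most a constant times `k^{∑ 1/r_i}` (`lr_norm_le`). Letting `k → ∞` contradicts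
`∑ 1/r_i < 1/p`.
-/

open scoped BigOperators

/-- `E` has the sign lower `p`-estimate property: there are a seminormalized sequence
`(y_j)` in `E` and `R > 0` with `R k^{1/p} ≤ ‖∑_{j=1}^k ε_j y_j‖` for all `k` and all
signs `ε_j = ±1`. -/
def SignLowerEstimate (E : Type*) [NormedAddCommGroup E] (p : ℝ) : Prop :=
  ∃ (y : ℕ → E) (R : ℝ), 0 < R ∧ (∃ K : ℝ, ∀ j, ‖y j‖ ≤ K) ∧
    (∃ c : ℝ, 0 < c ∧ ∀ j, c ≤ ‖y j‖) ∧
    ∀ (k : ℕ) (ε : Fin k → Bool),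
      R * (k : ℝ) ^ (1 / p) ≤ ‖∑ j : Fin k, (if ε j then y (j : ℕ) else -y (j : ℕ))‖

/-- A lower bound valid for every choice of signs passes to the quadratic average. -/
lemma le_radNorm {F : Type*} [NormedAddCommGroup F] {k : ℕ} (y : Fin k → F) {a : ℝ}
    (ha : 0 ≤ a)
    (h : ∀ ε : Fin k → Bool, a ≤ ‖∑ j, (if ε j then y j else -y j)‖) : a ≤ radNorm y := by
  unfold radNorm
  apply Real.le_sqrt_of_sq_le
  have h1 : ∑ _ε : Fin k → Bool, a ^ 2 ≤
      ∑ ε : Fin k → Bool, ‖∑ j, (if ε j then y j else -y j)‖ ^ 2 :=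
    Finset.sum_le_sum fun ε _ => pow_le_pow_left₀ ha (h ε) 2
  simp only [Finset.sum_const, Finset.card_univ, Fintype.card_fun, Fintype.card_bool,
    Fintype.card_fin, nsmul_eq_mul, Nat.cast_pow, Nat.cast_ofNat] at h1
  rw [inv_mul_eq_div, le_div_iff₀ (by positivity)]
  linarith

lemma le_lr_norm {k : ℕ} (a : Fin k → ℝ) (ha : ∀ j, 0 ≤ a j) {r : ℝ} (hr : 0 < r) (j : Fin k) :
    a j ≤ (∑ j, a j ^ r) ^ (1 / r) := by
  have h : a j ^ r ≤ ∑ j, a j ^ r :=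
    Finset.single_le_sum (f := fun j => a j ^ r)
      (fun i _ => Real.rpow_nonneg (ha i) r) (Finset.mem_univ j)
  calc a j = (a j ^ r) ^ (1 / r) := by
        rw [← Real.rpow_mul (ha j), mul_one_div_cancel hr.ne', Real.rpow_one]
    _ ≤ _ := Real.rpow_le_rpow (Real.rpow_nonneg (ha j) r) h (by positivity)

lemma lr_norm_le {k : ℕ} (a : Fin k → ℝ) (ha : ∀ j, 0 ≤ a j) {r B : ℝ} (hr : 0 < r)
    (hB : 0 ≤ B) (h : ∀ j, a j ≤ B) :
    (∑ j, a j ^ r) ^ (1 / r) ≤ B * (k : ℝ) ^ (1 / r) := by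
  have h1 : ∑ j, a j ^ r ≤ k * B ^ r := by
    calc ∑ j, a j ^ r ≤ ∑ _j : Fin k, B ^ r :=
          Finset.sum_le_sum fun j _ => Real.rpow_le_rpow (ha j) (h j) hr.le
      _ = k * B ^ r := by simp
  calc (∑ j, a j ^ r) ^ (1 / r) ≤ (k * B ^ r) ^ (1 / r) :=
        Real.rpow_le_rpow (Finset.sum_nonneg fun j _ => Real.rpow_nonneg (ha j) r) h1
          (by positivity)
    _ = B * (k : ℝ) ^ (1 / r) := by
        rw [Real.mul_rpow (by positivity) (Real.rpow_nonneg hB r), ← Real.rpow_mul hB,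
          mul_one_div_cancel hr.ne', Real.rpow_one, mul_comm]

/-- Any bounded multilinear map into a space of type `p` has every multilinear type one of whose
exponents is `p`: the remaining factors are controlled by their suprema. -/
lemma hasType_of_linHasType {𝕜 : Type*} [RCLike 𝕜] {n : ℕ} {E : Fin n → Type*} {F : Type*}
    [∀ i, NormedAddCommGroup (E i)] [∀ i, NormedSpace 𝕜 (E i)]
    [NormedAddCommGroup F] [NormedSpace 𝕜 F]
    (T : ContinuousMultilinearMap 𝕜 E F) {p : ℝ}
    (htype : LinHasType (ContinuousLinearMap.id 𝕜 F) p)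
    (pp : Fin n → ℝ) (hpp : ∀ i, 0 < pp i) (k : Fin n) (hk : pp k = p) : HasType T pp := by
  obtain ⟨C, hC, hCt⟩ := htype
  have hp : 0 < p := hk ▸ hpp k
  -- `‖T‖ + 1` rather than `‖T‖`, since the type constant has to be positive.
  refine ⟨C * (‖T‖ + 1), by positivity, fun m x => ?_⟩
  set N : Fin n → ℝ := fun i => (∑ j, ‖x i j‖ ^ pp i) ^ (1 / pp i) with hN
  have hN0 : ∀ i, 0 ≤ N i := fun i => by positivity
  set P : ℝ := ∏ i ∈ Finset.univ.erase k, N i with hP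
  have hP0 : 0 ≤ P := Finset.prod_nonneg fun i _ => hN0 i
  have hprod : ∏ i, N i = P * N k := (Finset.prod_erase_mul _ _ (Finset.mem_univ k)).symm
  have hpt : ∀ j, ‖T (fun i => x i j)‖ ≤ (‖T‖ + 1) * P * ‖x k j‖ := fun j => by
    calc ‖T (fun i => x i j)‖ ≤ ‖T‖ * ∏ i, ‖x i j‖ := T.le_opNorm _
      _ = ‖T‖ * ((∏ i ∈ Finset.univ.erase k, ‖x i j‖) * ‖x k j‖) := by
          rw [Finset.prod_erase_mul _ _ (Finset.mem_univ k)]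
      _ ≤ (‖T‖ + 1) * (P * ‖x k j‖) := by
          gcongr
          · linarith
          · exact Finset.prod_le_prod (fun i _ => norm_nonneg _) fun i _ =>
              le_lr_norm (fun j => ‖x i j‖) (fun j => norm_nonneg _) (hpp i) j
      _ = _ := by ring
  have hD : 0 ≤ (‖T‖ + 1) * P := by positivity
  have hsum : (∑ j, ‖T (fun i => x i j)‖ ^ p) ^ (1 / p) ≤ (‖T‖ + 1) * P * N k := by
    calc (∑ j, ‖T (fun i => x i j)‖ ^ p) ^ (1 / p)
        ≤ (((‖T‖ + 1) * P) ^ p * ∑ j, ‖x k j‖ ^ p) ^ (1 / p) := by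
          apply Real.rpow_le_rpow (by positivity) _ (by positivity)
          rw [Finset.mul_sum]
          refine Finset.sum_le_sum fun j _ => ?_
          rw [← Real.mul_rpow hD (norm_nonneg _)]
          exact Real.rpow_le_rpow (norm_nonneg _) (hpt j) hp.le
      _ = (‖T‖ + 1) * P * N k := by
          rw [Real.mul_rpow (by positivity) (by positivity), ← Real.rpow_mul hD,
            mul_one_div_cancel hp.ne', Real.rpow_one, hN]
          simp only [hk]
  calc radNorm (fun j => T (fun i => x i j))
      ≤ C * (∑ j, ‖T (fun i => x i j)‖ ^ p) ^ (1 / p) := hCt m (fun j => T (fun i => x i j))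
    _ ≤ C * ((‖T‖ + 1) * P * N k) := by gcongr
    _ = C * (‖T‖ + 1) * ∏ i, N i := by rw [hprod]; ring

/-- If `φ₁,…,φₙ` are nonzero functionals and `E_{n+1}` has type `1 < p ≤ 2` and the sign
lower `p`-estimate property, then `φ₁ ⊗ ⋯ ⊗ φₙ ⊗ id_{E_{n+1}}` has every proper type
`(p₁,…,p_{n+1})` with `p_k = p` for some `k`, and fails to have type `(r₁,…,r_{n+1})`
whenever `1/2 ≤ 1/r₁ + ⋯ + 1/r_{n+1} < 1/p`. -/
theorem tensor_id_type_optimal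
    {𝕜 : Type*} [RCLike 𝕜] {n : ℕ} {E : Fin (n + 1) → Type*}
    [∀ i, NormedAddCommGroup (E i)] [∀ i, NormedSpace 𝕜 (E i)] [∀ i, CompleteSpace (E i)]
    (φ : ∀ i : Fin n, E i.castSucc →L[𝕜] 𝕜) (hφ : ∀ i, φ i ≠ 0)
    (p : ℝ) (hp₁ : 1 < p) (hp₂ : p ≤ 2)
    (htype : LinHasType (ContinuousLinearMap.id 𝕜 (E (Fin.last n))) p)
    (hlow : SignLowerEstimate (E (Fin.last n)) p)
    (T : ContinuousMultilinearMap 𝕜 E (E (Fin.last n)))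
    (hT : ∀ x : ∀ i, E i,
      T x = (∏ i : Fin n, φ i (x i.castSucc)) • x (Fin.last n)) :
    (∀ pp : Fin (n + 1) → ℝ, (∀ i, 0 < pp i) →
        (1 : ℝ) / 2 ≤ ∑ i, 1 / pp i → ∑ i, 1 / pp i < 1 →
        (∃ k, pp k = p) → HasType T pp) ∧
    (∀ r : Fin (n + 1) → ℝ, (∀ i, 0 < r i) →
        (1 : ℝ) / 2 ≤ ∑ i, 1 / r i → ∑ i, 1 / r i < 1 / p →
        ¬ HasType T r) := by
  refine ⟨fun pp hpp _ _ ⟨k, hk⟩ => hasType_of_linHasType T htype pp hpp k hk,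
    fun r hr _ hr2 hTr => ?_⟩
  obtain ⟨C, hC, hCt⟩ := hTr
  obtain ⟨y, R, hR, ⟨K, hK⟩, -, hy⟩ := hlow
  have hv : ∀ i, ∃ v, φ i v = 1 := fun i => by
    obtain ⟨u, hu⟩ : ∃ u, φ i u ≠ 0 := by
      by_contra! h
      exact hφ i (ContinuousLinearMap.ext h)
    exact ⟨(φ i u)⁻¹ • u, by simp [hu]⟩
  choose v hv using hv
  -- The test sequences: constantly `v i` in the first `n` slots, and `y` in the last one.
  let x : ∀ i, ℕ → E i := Fin.lastCases (motive := fun i => ℕ → E i) y (fun i _ => v i)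
  let B : Fin (n + 1) → ℝ := Fin.lastCases (motive := fun _ => ℝ) K (fun i => ‖v i‖)
  have hxB : ∀ i j, ‖x i j‖ ≤ B i := fun i => by
    refine Fin.lastCases ?_ (fun i => ?_) i
    · intro j
      simpa [x, B] using hK j
    · intro j
      simp [x, B]
  have hB : ∀ i, 0 ≤ B i := fun i => (norm_nonneg _).trans (hxB i 0)
  have hTx : ∀ j, T (fun i => x i j) = y j := fun j => by
    rw [hT]
    simp [x, hv]
  set s : ℝ := ∑ i, 1 / r i with hs
  have key : ∀ k : ℕ, 0 < k → R * (k : ℝ) ^ (1 / p - s) ≤ C * ∏ i, B i := fun k hk => by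
    have hk' : (0 : ℝ) < k := by exact_mod_cast hk
    have h1 : R * (k : ℝ) ^ (1 / p) ≤ C * (∏ i, B i) * (k : ℝ) ^ s := by
      calc R * (k : ℝ) ^ (1 / p) ≤ radNorm (fun j : Fin k => y j) :=
            le_radNorm _ (by positivity) (hy k)
        _ = radNorm (fun j : Fin k => T (fun i => x i j)) := by simp only [hTx]
        _ ≤ C * ∏ i, (∑ j : Fin k, ‖x i j‖ ^ r i) ^ (1 / r i) := hCt k (fun i j => x i j)
        _ ≤ C * ∏ i, (B i * (k : ℝ) ^ (1 / r i)) := by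
            gcongr with i
            exact lr_norm_le (fun j : Fin k => ‖x i j‖) (fun j => norm_nonneg _) (hr i) (hB i)
              fun j => hxB i j
        _ = C * (∏ i, B i) * (k : ℝ) ^ s := by
            rw [Finset.prod_mul_distrib, hs, Real.rpow_sum_of_pos hk', mul_assoc]
    rw [Real.rpow_sub hk', ← mul_div_assoc, div_le_iff₀ (by positivity)]
    exact h1
  have hlim : Filter.Tendsto (fun k : ℕ => R * (k : ℝ) ^ (1 / p - s)) Filter.atTop
      Filter.atTop :=
    ((tendsto_rpow_atTop (sub_pos.2 hr2)).comp tendsto_natCast_atTop_atTop).const_mul_atTop hR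
  obtain ⟨k, hk1, hk2⟩ := ((hlim.eventually_gt_atTop (C * ∏ i, B i)).and
    (Filter.eventually_gt_atTop 0)).exists
  exact absurd (key k hk2) (not_le.2 hk1)
end
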